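/- (Backward Substitution Lemma.) If there is a derivation Γ;Δ ⊢ M[N/x] : β in the multi-type system for the λI-calculus with x ∈ fv(M), then there exist a multiset type ᾱ, type environments Γᴹ and Γᴺ, and variable environments Δᴹ and Δᴺ, together with derivations (Γᴹ, x:ᾱ);(Δᴹ, x:⋃Δᴺ) ⊢ M : β and Γᴺ;Δᴺ ⊢! N : ᾱ, such that Γ = Γᴹ + Γᴺ, Δᴹ ≍ Δᴺ, and Δ = Δᴹ ∨ Δᴺ. -/

import Mathlib

set_option maxHeartbeats 1000000

/-! # λ-terms (named variables over ℕ) -/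

inductive Lam : Type
  | var : ℕ → Lam
  | app : Lam → Lam → Lam
  | lam : ℕ → Lam → Lam
deriving DecidableEq

namespace Lam

/-- Free variables of a λ-term. -/
def fv : Lam → Finset ℕ
  | var x => {x}
  | app M N => M.fv ∪ N.fv
  | lam x M => M.fv.erase x

/-- λI-terms: every abstraction `λx.M` satisfies `x ∈ fv M`. -/
def IsI : Lam → Prop
  | var _ => True
  | app M N => M.IsI ∧ N.IsI
  | lam x M => x ∈ M.fv ∧ M.IsI

/-- A variable not belonging to a given finite set. -/
def freshVar (s : Finset ℕ) : ℕ := (s.sup id) + 1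

/-- Capture-avoiding simultaneous substitution (bound variables are freshened). -/
def substF : Lam → (ℕ → Lam) → Lam
  | var x, σ => σ x
  | app M N, σ => app (M.substF σ) (N.substF σ)
  | lam x M, σ =>
      let y := freshVar ((M.fv.erase x).biUnion fun z => (σ z).fv)
      lam y (M.substF (Function.update σ x (var y)))

/-- Capture-avoiding substitution `M[N/x]`. -/
def subst (M : Lam) (x : ℕ) (N : Lam) : Lam :=
  M.substF fun z => if z = x then N else var z

/-- Being an abstraction. -/
def isAbs : Lam → Prop
  | lam _ _ => True
  | _ => False

end Lam

/-- One-step β-reduction. -/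
inductive Beta : Lam → Lam → Prop
  | beta (x : ℕ) (M N : Lam) : Beta (.app (.lam x M) N) (M.subst x N)
  | appL {M M' : Lam} (N : Lam) : Beta M M' → Beta (.app M N) (.app M' N)
  | appR {N N' : Lam} (M : Lam) : Beta N N' → Beta (.app M N) (.app M N')
  | lam (x : ℕ) {M M' : Lam} : Beta M M' → Beta (.lam x M) (.lam x M')

/-- One-step head reduction. -/
inductive Head : Lam → Lam → Prop
  | beta (x : ℕ) (M N : Lam) : Head (.app (.lam x M) N) (M.subst x N)
  | app {M M' : Lam} (N : Lam) : ¬ M.isAbs → Head M M' → Head (.app M N) (.app M' N)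
  | lam (x : ℕ) {M M' : Lam} : Head M M' → Head (.lam x M) (.lam x M')

/-- Iterated head reduction. -/
def HeadStar : Lam → Lam → Prop := Relation.ReflTransGen Head

/-- Terms of the shape `y M₁ ⋯ Mₖ`. -/
inductive Neutral : Lam → Prop
  | var (x : ℕ) : Neutral (.var x)
  | app {M : Lam} (N : Lam) : Neutral M → Neutral (.app M N)

/-- Head normal forms `λx₁…xₙ.y M₁ ⋯ Mₖ`. -/
inductive Hnf : Lam → Prop
  | neutral {M : Lam} : Neutral M → Hnf M
  | lam (x : ℕ) {M : Lam} : Hnf M → Hnf (.lam x M)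

/-- `M` has a head normal form. -/
def HasHnf (M : Lam) : Prop := ∃ H, HeadStar M H ∧ Hnf H

/-! # Multi-types -/

/-- Simple types: atoms `a ∈ ℕ`, arrows `[]_X → β` and `[α₀,…,αₙ] → β`. -/
inductive STy : Type
  | atom : ℕ → STy
  | arr0 : Finset ℕ → STy → STy
  | arrP : STy → List STy → STy → STy

/-- Multiset types: the annotated empty multiset `[]_X` or a
non-empty multiset `[α₀,…,αₙ]` (head plus tail). -/
inductive MTy : Type
  | empty : Finset ℕ → MTy
  | mk : STy → List STy → MTy

/-- The arrow type `ᾱ → β`. -/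
def MTy.arr : MTy → STy → STy
  | .empty X, β => .arr0 X β
  | .mk α l, β => .arrP α l β

/-- The underlying multiset of simple types of a multiset type. -/
def MTy.toM : MTy → Multiset STy
  | .empty _ => 0
  | .mk α l => α ::ₘ (l : Multiset STy)

/-- Multi-types: `σ ::= e_X | α`. -/
inductive OTy : Type
  | esum : Finset ℕ → OTy
  | simple : STy → OTy

mutual
/-- Atoms occurring in a simple type. -/
def STy.atoms : STy → Finset ℕ
  | .atom a => {a}
  | .arr0 _ β => β.atoms
  | .arrP α l β => α.atoms ∪ STy.atomsL l ∪ β.atoms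
def STy.atomsL : List STy → Finset ℕ
  | [] => ∅
  | α :: l => α.atoms ∪ STy.atomsL l
end

/-! # Environments -/

/-- Type environments: finitely supported maps from variables
to finite multisets of simple types; added pointwise. -/
abbrev TEnv := ℕ →₀ Multiset STy

/-- Variable environments: finite partial maps from variables to finite
sets of variables. -/
abbrev VEnv := Finmap (fun _ : ℕ => Finset ℕ)

namespace VEnv

/-- `⋃Δ`: the union of the values of `Δ`. -/
def uni (Δ : VEnv) : Finset ℕ :=
  Δ.keys.biUnion fun x => (Δ.lookup x).getD ∅

/-- Coherence `Δ₀ ≍ Δ₁`: agreement on the common domain. -/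
def Coh (Δ₀ Δ₁ : VEnv) : Prop :=
  ∀ x : ℕ, x ∈ Δ₀ → x ∈ Δ₁ → Δ₀.lookup x = Δ₁.lookup x

end VEnv

/-! # The multi-type system for the λI-calculus -/

mutual
/-- Typing judgement `Γ; Δ ⊢ M : σ`. -/
inductive Der : TEnv → VEnv → Lam → OTy → Prop
  | esum {Δ : VEnv} {M : Lam} :
      Δ.keys = M.fv → Der 0 Δ M (.esum Δ.uni)
  | ax (x : ℕ) (α : STy) (X : Finset ℕ) :
      Der (Finsupp.single x {α}) (Finmap.singleton x X) (.var x) (.simple α)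
  | app {Γ₀ Γ₁ : TEnv} {Δ₀ Δ₁ : VEnv} {M N : Lam} {m : MTy} {β : STy} :
      Der Γ₀ Δ₀ M (.simple (m.arr β)) → DerB Γ₁ Δ₁ N m → VEnv.Coh Δ₀ Δ₁ →
      Der (Γ₀ + Γ₁) (Δ₀ ∪ Δ₁) (.app M N) (.simple β)
  | lam0 {Γ : TEnv} {Δ : VEnv} {x : ℕ} {X : Finset ℕ} {M : Lam} {β : STy} :
      Γ x = 0 → x ∉ Δ → Der Γ (Δ.insert x X) M (.simple β) →
      Der Γ Δ (.lam x M) (.simple (.arr0 X β))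
  | lamP {Γ : TEnv} {Δ : VEnv} {x : ℕ} {X : Finset ℕ} {M : Lam} {α : STy}
      {l : List STy} {β : STy} :
      Γ x = 0 → x ∉ Δ →
      Der (Γ + Finsupp.single x (MTy.mk α l).toM) (Δ.insert x X) M (.simple β) →
      Der Γ Δ (.lam x M) (.simple (.arrP α l β))

/-- Typing judgement `Γ; Δ ⊢! M : ᾱ`. -/
inductive DerB : TEnv → VEnv → Lam → MTy → Prop
  | bang0 {Δ : VEnv} {M : Lam} :
      Δ.keys = M.fv → DerB 0 Δ M (.empty Δ.uni)
  | one {Γ : TEnv} {Δ : VEnv} {M : Lam} {α : STy} :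
      Der Γ Δ M (.simple α) → DerB Γ Δ M (.mk α [])
  | cons {Γ₀ Γ₁ : TEnv} {Δ : VEnv} {M : Lam} {α α' : STy} {l : List STy} :
      Der Γ₀ Δ M (.simple α) → DerB Γ₁ Δ M (.mk α' l) →
      DerB (Γ₀ + Γ₁) Δ M (.mk α (α' :: l))
end

/-- The multi-type interpretation `⟦M⟧`. -/
def interp (M : Lam) : Set (TEnv × VEnv × OTy) :=
  { p | Der p.1 p.2.1 M p.2.2 }

/-! # Ohana trees (coinductive equality, as a greatest fixpoint) -/

/-- Matching of the spines `y M₁ ⋯ Mₖ` of two head normal forms: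
same head variable, same number of arguments, arguments related by `R`. -/
inductive SpineMatch (R : Lam → Lam → Prop) : Lam → Lam → Prop
  | var (y : ℕ) : SpineMatch R (.var y) (.var y)
  | app {P Q M N : Lam} : SpineMatch R P Q → R M N →
      SpineMatch R (.app P M) (.app Q N)

/-- Matching of two head normal forms, comparing abstraction prefixes
up to renaming of the bound variables. -/
inductive HnfMatch (R : Lam → Lam → Prop) : Lam → Lam → Prop
  | base {P Q : Lam} : SpineMatch R P Q → HnfMatch R P Q
  | lam {x y : ℕ} {P Q : Lam} :
      (∀ z : ℕ, z ∉ (P.fv.erase x ∪ Q.fv.erase y) →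
        HnfMatch R (P.subst x (.var z)) (Q.subst y (.var z))) →
      HnfMatch R (.lam x P) (.lam y Q)

/-- `R` is an Ohana-tree bisimulation. -/
def OTBisim (R : Lam → Lam → Prop) : Prop :=
  ∀ M N, R M N →
    (¬ HasHnf M ∧ ¬ HasHnf N ∧ M.fv = N.fv) ∨
    (∃ P Q, HeadStar M P ∧ HeadStar N Q ∧ Hnf P ∧ Hnf Q ∧ HnfMatch R P Q)

/-- Equality of Ohana trees: `OT(M) = OT(N)`. -/
def OTEq (M N : Lam) : Prop := ∃ R, OTBisim R ∧ R M N

/-! # λI-resource terms -/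

mutual
inductive RTm : Type
  | var : ℕ → RTm
  | lam : ℕ → RTm → RTm
  | app : RTm → RBag → RTm
inductive RBag : Type
  | empty : Finset ℕ → RBag
  | mk : RTm → List RTm → RBag
end

noncomputable instance : DecidableEq RTm := fun _ _ => Classical.dec _
noncomputable instance : DecidableEq RBag := fun _ _ => Classical.dec _

mutual
/-- Free variables of a resource term. -/
def RTm.fv : RTm → Finset ℕ
  | .var x => {x}
  | .lam x s => s.fv.erase x
  | .app s b => s.fv ∪ b.fv
/-- Free variables of a bag. -/
def RBag.fv : RBag → Finset ℕ
  | .empty X => X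
  | .mk h t => h.fv ∪ RTm.fvL t
/-- Free variables of a list of resource terms. -/
def RTm.fvL : List RTm → Finset ℕ
  | [] => ∅
  | h :: t => h.fv ∪ RTm.fvL t
end

mutual
/-- λI-resource terms: in every abstraction `λx.s`, `x` occurs free in `s`. -/
inductive RTm.IsIr : RTm → Prop
  | var (x : ℕ) : RTm.IsIr (.var x)
  | lam {x : ℕ} {s : RTm} : x ∈ s.fv → RTm.IsIr s → RTm.IsIr (.lam x s)
  | app {s : RTm} {b : RBag} : RTm.IsIr s → RBag.IsIr b → RTm.IsIr (.app s b)
inductive RBag.IsIr : RBag → Prop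
  | empty (X : Finset ℕ) : RBag.IsIr (.empty X)
  | mk {h : RTm} {t : List RTm} : RTm.IsIr h → (∀ u ∈ t, RTm.IsIr u) →
      RBag.IsIr (.mk h t)
end

/-- The list of elements of a bag. -/
def RBag.toList : RBag → List RTm
  | .empty _ => []
  | .mk h t => h :: t

/-! Linear (bijective) substitution: `LSub s x ts t` means that `t` is obtained
by substituting the elements of the list `ts` for the free occurrences of `x`
in `s`, in left-to-right order (annotations of empty bags absorb). -/
mutual
inductive LSub : RTm → ℕ → List RTm → RTm → Prop
  | var_hit (x : ℕ) (t : RTm) : LSub (.var x) x [t] t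
  | var_miss {x y : ℕ} : y ≠ x → LSub (.var y) x [] (.var y)
  | lam {x y : ℕ} {s : RTm} {ts : List RTm} {s' : RTm} :
      y ≠ x → y ∉ RTm.fvL ts → LSub s x ts s' →
      LSub (.lam y s) x ts (.lam y s')
  | app {s : RTm} {b : RBag} {x : ℕ} {ts₁ ts₂ : List RTm} {s' : RTm} {b' : RBag} :
      LSub s x ts₁ s' → LSubB b x ts₂ b' →
      LSub (.app s b) x (ts₁ ++ ts₂) (.app s' b')
inductive LSubB : RBag → ℕ → List RTm → RBag → Prop
  | empty_hit {X : Finset ℕ} {x : ℕ} {ts : List RTm} :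
      x ∈ X → LSubB (.empty X) x ts (.empty ((X.erase x) ∪ RTm.fvL ts))
  | empty_miss {X : Finset ℕ} {x : ℕ} :
      x ∉ X → LSubB (.empty X) x [] (.empty X)
  | mk {h : RTm} {t : List RTm} {x : ℕ} {ts₁ ts₂ : List RTm} {h' : RTm}
      {t' : List RTm} :
      LSub h x ts₁ h' → LSubL t x ts₂ t' →
      LSubB (.mk h t) x (ts₁ ++ ts₂) (.mk h' t')
inductive LSubL : List RTm → ℕ → List RTm → List RTm → Prop
  | nil (x : ℕ) : LSubL [] x [] []
  | cons {h : RTm} {t : List RTm} {x : ℕ} {ts₁ ts₂ : List RTm} {h' : RTm}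
      {t' : List RTm} :
      LSub h x ts₁ h' → LSubL t x ts₂ t' →
      LSubL (h :: t) x (ts₁ ++ ts₂) (h' :: t')
end

/-- The root resource reduction step `(λx.s)b →r T`:
`T` is the sum of all results of bijective substitution of the elements
of `b` for the free occurrences of `x` in `s`. -/
def RootRed (x : ℕ) (s : RTm) (b : RBag) (T : Finset RTm) : Prop :=
  ∀ u : RTm, u ∈ T ↔ ∃ l : List RTm, l.Perm b.toList ∧ LSub s x l u

/-- Pushing an element on top of a bag. -/
def RBag.push (h : RTm) : RBag → RBag
  | .empty _ => .mk h []
  | .mk h' t => .mk h (h' :: t)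

mutual
/-- One-step resource reduction of a term to a finite sum. -/
inductive RStep : RTm → Finset RTm → Prop
  | root {x : ℕ} {s : RTm} {b : RBag} {T : Finset RTm} :
      RootRed x s b T → RStep (.app (.lam x s) b) T
  | appL {s : RTm} {T : Finset RTm} {b : RBag} :
      RStep s T → RStep (.app s b) (T.image fun s' => .app s' b)
  | appB {s : RTm} {b : RBag} {Tb : Finset RBag} :
      RStepB b Tb → RStep (.app s b) (Tb.image fun b' => .app s b')
  | lam {x : ℕ} {s : RTm} {T : Finset RTm} :
      RStep s T → RStep (.lam x s) (T.image fun s' => .lam x s')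
/-- One-step resource reduction inside a bag. -/
inductive RStepB : RBag → Finset RBag → Prop
  | head {h : RTm} {t : List RTm} {T : Finset RTm} :
      RStep h T → RStepB (.mk h t) (T.image fun h' => .mk h' t)
  | tail {h h₂ : RTm} {t : List RTm} {B : Finset RBag} :
      RStepB (.mk h₂ t) B → RStepB (.mk h (h₂ :: t)) (B.image (RBag.push h))
end

/-- One-step resource reduction on finite sums (linear extension). -/
inductive RRed : Finset RTm → Finset RTm → Prop
  | step {S : Finset RTm} {s : RTm} {T : Finset RTm} :
      s ∈ S → RStep s T → RRed S ((S.erase s) ∪ T)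

/-- `→r*`. -/
def RRedStar : Finset RTm → Finset RTm → Prop := Relation.ReflTransGen RRed

/-! # The resource multi-type system -/

mutual
/-- Resource typing judgement `Γ; Δ ⊢ s : α`. -/
inductive DerR : TEnv → VEnv → RTm → STy → Prop
  | ax (x : ℕ) (α : STy) (X : Finset ℕ) :
      DerR (Finsupp.single x {α}) (Finmap.singleton x X) (.var x) α
  | app {Γ₀ Γ₁ : TEnv} {Δ₀ Δ₁ : VEnv} {s : RTm} {b : RBag} {m : MTy} {β : STy} :
      DerR Γ₀ Δ₀ s (m.arr β) → DerRB Γ₁ Δ₁ b m → VEnv.Coh Δ₀ Δ₁ →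
      DerR (Γ₀ + Γ₁) (Δ₀ ∪ Δ₁) (.app s b) β
  | lam0 {Γ : TEnv} {Δ : VEnv} {x : ℕ} {X : Finset ℕ} {s : RTm} {β : STy} :
      Γ x = 0 → x ∉ Δ → DerR Γ (Δ.insert x X) s β →
      DerR Γ Δ (.lam x s) (.arr0 X β)
  | lamP {Γ : TEnv} {Δ : VEnv} {x : ℕ} {X : Finset ℕ} {s : RTm} {α : STy}
      {l : List STy} {β : STy} :
      Γ x = 0 → x ∉ Δ →
      DerR (Γ + Finsupp.single x (MTy.mk α l).toM) (Δ.insert x X) s β →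
      DerR Γ Δ (.lam x s) (.arrP α l β)
/-- Resource typing judgement `Γ; Δ ⊢! t̄ : ᾱ`. -/
inductive DerRB : TEnv → VEnv → RBag → MTy → Prop
  | bang0 {Δ : VEnv} : DerRB 0 Δ (.empty Δ.keys) (.empty Δ.uni)
  | one {Γ : TEnv} {Δ : VEnv} {t : RTm} {α : STy} :
      DerR Γ Δ t α → DerRB Γ Δ (.mk t []) (.mk α [])
  | cons {Γ₀ Γ₁ : TEnv} {Δ : VEnv} {t t' : RTm} {l : List RTm} {α α' : STy}
      {la : List STy} :
      DerR Γ₀ Δ t α → DerRB Γ₁ Δ (.mk t' l) (.mk α' la) →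
      DerRB (Γ₀ + Γ₁) Δ (.mk t (t' :: l)) (.mk α (α' :: la))
end

/-! # Taylor expansion -/

/-- `Taylor M s`: the resource term `s` belongs to the Taylor expansion `T(M)`. -/
inductive Taylor : Lam → RTm → Prop
  | var (x : ℕ) : Taylor (.var x) (.var x)
  | lam {M : Lam} {s : RTm} (x : ℕ) : Taylor M s → Taylor (.lam x M) (.lam x s)
  | app0 {M N : Lam} {s : RTm} : Taylor M s →
      Taylor (.app M N) (.app s (.empty N.fv))
  | appP {M N : Lam} {s t : RTm} {l : List RTm} :
      Taylor M s → Taylor N t → (∀ u ∈ l, Taylor N u) →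
      Taylor (.app M N) (.app s (.mk t l))

/-! # Miscellaneous constructions for the last statement -/

/-- The variable environment `Δ_id` mapping each `x ∈ s` to `{x}`. -/
def idEnv (s : Finset ℕ) : VEnv :=
  (s.sort (· ≤ ·)).foldr (fun x Δ => Δ.insert x ({x} : Finset ℕ)) ∅

/-- The term `y M₁ ⋯ Mₖ`. -/
def Lam.spineApp (y : ℕ) (l : List Lam) : Lam := l.foldl .app (.var y)

/-- The type `[]_{fv N₁} → ⋯ → []_{fv Nₖ} → a`. -/
def yTyRest (a : ℕ) : List Lam → STy
  | [] => .atom a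
  | N :: l => .arr0 N.fv (yTyRest a l)

/-- The type `[]_{fv M₁} → ⋯ → [α] → ⋯ → []_{fv Mₖ} → a`, with `[α]`
in the `i`-th argument position (0-based). -/
def yTy (α : STy) (a : ℕ) : List Lam → ℕ → STy
  | [], _ => .atom a
  | _ :: l, 0 => .arrP α [] (yTyRest a l)
  | N :: l, (i+1) => .arr0 N.fv (yTy α a l i)

/-!
Bound variables are freshened by `substF`, so the inversion is proved for a simultaneous
substitution `σ`. A derivation of `M.substF σ` splits at the free occurrences of variables in `M`:
an occurrence of `z` at which the substituted copy of `σ z` gets the type `α` is retyped by the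
axiom `z : [α]`. Collecting these axioms gives the type environment of `M`, and the derivations of
the copies add up to a typing of `σ` by that environment. The annotation of `z` has to be the union
of the sets which the variable environment assigns to the free variables of `σ z`.
-/

/-! ### Restriction and pullback of variable environments -/

namespace VEnv

/-- The variable environment with domain `s` and values `f`. -/
def ofFun (s : Finset ℕ) (f : ℕ → Finset ℕ) : VEnv :=
  Finmap.keysLookupEquiv.symm
    ⟨(s, fun z => if z ∈ s then some (f z) else none), fun z => by
      by_cases hz : z ∈ s <;> simp [hz]⟩

@[simp]
theorem keys_ofFun (s : Finset ℕ) (f : ℕ → Finset ℕ) : (ofFun s f).keys = s :=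
  Finmap.keysLookupEquiv_symm_apply_keys _

@[simp]
theorem mem_ofFun {s : Finset ℕ} {f : ℕ → Finset ℕ} {z : ℕ} : z ∈ ofFun s f ↔ z ∈ s := by
  rw [← Finmap.mem_keys, keys_ofFun]

theorem lookup_ofFun (s : Finset ℕ) (f : ℕ → Finset ℕ) (z : ℕ) :
    (ofFun s f).lookup z = if z ∈ s then some (f z) else none :=
  Finmap.keysLookupEquiv_symm_apply_lookup _ _

theorem uni_ofFun (s : Finset ℕ) (f : ℕ → Finset ℕ) : (ofFun s f).uni = s.biUnion f := by
  rw [uni, keys_ofFun]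
  exact Finset.biUnion_congr rfl fun z hz => by simp [lookup_ofFun, hz]

theorem ofFun_congr {s : Finset ℕ} {f g : ℕ → Finset ℕ} (h : ∀ z ∈ s, f z = g z) :
    ofFun s f = ofFun s g :=
  Finmap.ext_lookup fun z => by by_cases hz : z ∈ s <;> simp [lookup_ofFun, hz, h]

theorem ofFun_singleton (x : ℕ) (f : ℕ → Finset ℕ) : ofFun {x} f = Finmap.singleton x (f x) := by
  refine Finmap.ext_lookup fun z => ?_
  by_cases hz : z = x
  · subst hz
    simp [lookup_ofFun]
  · have hz' : z ∉ (Finmap.singleton x (f x) : VEnv) := by simpa using hz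
    rw [lookup_ofFun, if_neg (by simpa using hz), Finmap.lookup_eq_none.2 hz']

theorem ofFun_union (s t : Finset ℕ) (f : ℕ → Finset ℕ) :
    ofFun (s ∪ t) f = ofFun s f ∪ ofFun t f := by
  refine Finmap.ext_lookup fun z => ?_
  by_cases hz : z ∈ s
  · simp [Finmap.lookup_union_left, lookup_ofFun, hz]
  · simp [Finmap.lookup_union_right, lookup_ofFun, hz]

theorem insert_ofFun_erase {s : Finset ℕ} {x : ℕ} (hx : x ∈ s) (f : ℕ → Finset ℕ) :
    (ofFun (s.erase x) f).insert x (f x) = ofFun s f := by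
  refine Finmap.ext_lookup fun z => ?_
  by_cases hz : z = x
  · subst hz
    simp [lookup_ofFun, hx]
  · simp [Finmap.lookup_insert_of_ne _ hz, lookup_ofFun, hz]

theorem coh_ofFun (s t : Finset ℕ) (f : ℕ → Finset ℕ) : Coh (ofFun s f) (ofFun t f) := by
  intro z hs ht
  rw [mem_ofFun] at hs ht
  simp [lookup_ofFun, hs, ht]

theorem keys_insert (Δ : VEnv) (x : ℕ) (X : Finset ℕ) :
    (Δ.insert x X).keys = insert x Δ.keys := by
  ext z
  simp [Finmap.mem_keys]

/-- The restriction `Δ|ₛ` of a variable environment to the variables in `s`. -/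
def restrict (Δ : VEnv) (s : Finset ℕ) : VEnv :=
  Finmap.keysLookupEquiv.symm
    ⟨(Δ.keys ∩ s, fun z => if z ∈ s then Δ.lookup z else none), fun z => by
      by_cases hz : z ∈ s <;> simp [hz, Finmap.mem_keys, Finmap.lookup_isSome]⟩

theorem keys_restrict (Δ : VEnv) (s : Finset ℕ) : (Δ.restrict s).keys = Δ.keys ∩ s :=
  Finmap.keysLookupEquiv_symm_apply_keys _

theorem lookup_restrict (Δ : VEnv) (s : Finset ℕ) (z : ℕ) :
    (Δ.restrict s).lookup z = if z ∈ s then Δ.lookup z else none :=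
  Finmap.keysLookupEquiv_symm_apply_lookup _ _

theorem uni_restrict (Δ : VEnv) (s : Finset ℕ) :
    (Δ.restrict s).uni = s.biUnion fun z => (Δ.lookup z).getD ∅ := by
  ext a
  simp only [uni, keys_restrict, lookup_restrict, Finset.mem_biUnion, Finset.mem_inter]
  refine ⟨fun ⟨z, ⟨_, hz⟩, ha⟩ => ⟨z, hz, by simpa [hz] using ha⟩, fun ⟨z, hz, ha⟩ => ?_⟩
  have hzΔ : z ∈ Δ := by
    by_contra hzΔ
    simp [Finmap.lookup_eq_none.2 hzΔ] at ha
  exact ⟨z, ⟨Finmap.mem_keys.2 hzΔ, hz⟩, by simpa [hz] using ha⟩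

theorem restrict_eq_self {Δ : VEnv} {s : Finset ℕ} (h : Δ.keys ⊆ s) : Δ.restrict s = Δ := by
  refine Finmap.ext_lookup fun z => ?_
  by_cases hz : z ∈ s
  · simp [lookup_restrict, hz]
  · have hzΔ : z ∉ Δ := fun hzΔ => hz (h (Finmap.mem_keys.2 hzΔ))
    simp [lookup_restrict, hz, Finmap.lookup_eq_none.2 hzΔ]

theorem restrict_union (Δ : VEnv) (s t : Finset ℕ) :
    Δ.restrict (s ∪ t) = Δ.restrict s ∪ Δ.restrict t := by
  refine Finmap.ext_lookup fun z => ?_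
  by_cases hz : z ∈ Δ.restrict s
  · have hs : z ∈ s := by
      rw [← Finmap.mem_keys, keys_restrict] at hz
      exact (Finset.mem_inter.1 hz).2
    simp [Finmap.lookup_union_left hz, lookup_restrict, hs]
  · have hnone := Finmap.lookup_eq_none.2 hz
    rw [lookup_restrict] at hnone
    by_cases hs : z ∈ s <;> simp_all [Finmap.lookup_union_right hz, lookup_restrict]

theorem coh_restrict (Δ : VEnv) (s t : Finset ℕ) : Coh (Δ.restrict s) (Δ.restrict t) := by
  intro z hs ht
  simp only [← Finmap.mem_keys, keys_restrict, Finset.mem_inter] at hs ht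
  simp [lookup_restrict, hs.2, ht.2]

theorem union_restrict_of_subset_left {Δ₀ : VEnv} (Δ₁ : VEnv) {s : Finset ℕ} (h : s ⊆ Δ₀.keys) :
    (Δ₀ ∪ Δ₁).restrict s = Δ₀.restrict s := by
  refine Finmap.ext_lookup fun z => ?_
  by_cases hz : z ∈ s
  · simp [lookup_restrict, hz, Finmap.lookup_union_left (Finmap.mem_keys.1 (h hz))]
  · simp [lookup_restrict, hz]

theorem Coh.union_restrict_of_subset_right {Δ₀ Δ₁ : VEnv} (hc : Coh Δ₀ Δ₁) {s : Finset ℕ}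
    (h : s ⊆ Δ₁.keys) : (Δ₀ ∪ Δ₁).restrict s = Δ₁.restrict s := by
  refine Finmap.ext_lookup fun z => ?_
  by_cases hz : z ∈ s
  · have hz₁ : z ∈ Δ₁ := Finmap.mem_keys.1 (h hz)
    by_cases hz₀ : z ∈ Δ₀
    · simp [lookup_restrict, hz, Finmap.lookup_union_left hz₀, hc z hz₀ hz₁]
    · simp [lookup_restrict, hz, Finmap.lookup_union_right hz₀]
  · simp [lookup_restrict, hz]

theorem insert_restrict_of_notMem (Δ : VEnv) {y : ℕ} (X : Finset ℕ) {s : Finset ℕ} (hy : y ∉ s) :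
    restrict (Δ.insert y X) s = Δ.restrict s := by
  refine Finmap.ext_lookup fun z => ?_
  by_cases hz : z ∈ s
  · have hzy : z ≠ y := fun hzy => hy (hzy ▸ hz)
    simp [lookup_restrict, hz, Finmap.lookup_insert_of_ne _ hzy]
  · simp [lookup_restrict, hz]

theorem uni_insert_restrict_singleton (Δ : VEnv) (y : ℕ) (X : Finset ℕ) :
    (restrict (Δ.insert y X) {y}).uni = X := by
  simp [uni_restrict]

/-- The variable environment which `Δ` induces along the substitution `σ`: a variable `z ∈ s` is
annotated by the union of the values of `Δ` at the free variables of `σ z`. -/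
def pullback (Δ : VEnv) (σ : ℕ → Lam) (s : Finset ℕ) : VEnv :=
  ofFun s fun z => (Δ.restrict (σ z).fv).uni

theorem pullback_congr {Δ Δ' : VEnv} {σ σ' : ℕ → Lam} {s : Finset ℕ}
    (hσ : ∀ z ∈ s, σ z = σ' z)
    (hΔ : ∀ z ∈ s, Δ.restrict (σ z).fv = Δ'.restrict (σ z).fv) :
    Δ.pullback σ s = Δ'.pullback σ' s :=
  ofFun_congr fun z hz => by rw [hΔ z hz, hσ z hz]

theorem insert_pullback_erase (Δ : VEnv) (σ : ℕ → Lam) {s : Finset ℕ} {x : ℕ} (hx : x ∈ s) :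
    (Δ.pullback σ (s.erase x)).insert x (Δ.restrict (σ x).fv).uni = Δ.pullback σ s :=
  insert_ofFun_erase hx _

theorem uni_pullback {Δ : VEnv} {σ : ℕ → Lam} {s : Finset ℕ}
    (h : Δ.keys = s.biUnion fun z => (σ z).fv) : (Δ.pullback σ s).uni = Δ.uni := by
  simp only [pullback, uni_ofFun, uni_restrict]
  rw [uni, h, Finset.biUnion_biUnion]

theorem pullback_var {Δ : VEnv} {s : Finset ℕ} (h : s ⊆ Δ.keys) :
    Δ.pullback Lam.var s = Δ.restrict s := by
  refine Finmap.ext_lookup fun z => ?_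
  by_cases hz : z ∈ s
  · obtain ⟨X, hX⟩ := Finmap.mem_iff.1 (Finmap.mem_keys.1 (h hz))
    simp [pullback, lookup_ofFun, lookup_restrict, uni_restrict, Lam.fv, hz, hX]
  · simp [pullback, lookup_ofFun, lookup_restrict, hz]

end VEnv

/-! ### Free variables of substitution instances -/

namespace Lam

theorem freshVar_notMem (s : Finset ℕ) : freshVar s ∉ s := by
  intro h
  have hle : freshVar s ≤ s.sup id := Finset.le_sup (f := id) h
  simp only [freshVar] at hle
  omega

theorem biUnion_fv_update_erase {s : Finset ℕ} {σ : ℕ → Lam} {x y : ℕ}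
    (hy : y ∉ (s.erase x).biUnion fun z => (σ z).fv) :
    (s.biUnion fun z => (Function.update σ x (var y) z).fv).erase y =
      (s.erase x).biUnion fun z => (σ z).fv := by
  ext w
  simp only [Finset.mem_erase, Finset.mem_biUnion, not_exists, not_and] at hy ⊢
  constructor
  · rintro ⟨hwy, z, hz, hw⟩
    have hzx : z ≠ x := by
      rintro rfl
      simp [fv, hwy] at hw
    exact ⟨z, ⟨hzx, hz⟩, by rwa [Function.update_of_ne hzx] at hw⟩
  · rintro ⟨z, ⟨hzx, hz⟩, hw⟩
    refine ⟨?_, z, hz, by rwa [Function.update_of_ne hzx]⟩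
    rintro rfl
    exact hy z ⟨hzx, hz⟩ hw

theorem fv_substF (M : Lam) (σ : ℕ → Lam) :
    (M.substF σ).fv = M.fv.biUnion fun z => (σ z).fv := by
  induction M generalizing σ with
  | var x => simp [substF, fv]
  | app P Q ihP ihQ => simp [substF, fv, ihP, ihQ, Finset.union_biUnion]
  | lam x P ih =>
    simp only [substF, fv, ih]
    exact biUnion_fv_update_erase (freshVar_notMem _)

theorem fv_subset_fv_substF {M : Lam} (σ : ℕ → Lam) {z : ℕ} (hz : z ∈ M.fv) :
    (σ z).fv ⊆ (M.substF σ).fv := by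
  rw [fv_substF]
  exact Finset.subset_biUnion_of_mem (fun z => (σ z).fv) hz

theorem mem_fv_of_mem_fv_substF_update {M : Lam} {σ : ℕ → Lam} {x y : ℕ}
    (hy : y ∉ (M.fv.erase x).biUnion fun z => (σ z).fv)
    (h : y ∈ (M.substF (Function.update σ x (var y))).fv) : x ∈ M.fv := by
  rw [fv_substF, Finset.mem_biUnion] at h
  obtain ⟨z, hz, hyz⟩ := h
  by_cases hzx : z = x
  · rwa [← hzx]
  · rw [Function.update_of_ne hzx] at hyz
    exact absurd (Finset.mem_biUnion.2 ⟨z, Finset.mem_erase.2 ⟨hzx, hz⟩, hyz⟩) hy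

theorem fv_subst {M : Lam} {x : ℕ} (N : Lam) (hx : x ∈ M.fv) :
    (M.subst x N).fv = M.fv.erase x ∪ N.fv := by
  rw [subst, fv_substF]
  conv_lhs => rw [← Finset.insert_erase hx, Finset.biUnion_insert]
  have hvar : ((M.fv.erase x).biUnion fun z => (if z = x then N else var z).fv) = M.fv.erase x := by
    rw [Finset.biUnion_congr rfl fun z hz => by rw [if_neg (Finset.ne_of_mem_erase hz), fv]]
    exact Finset.biUnion_singleton_eq_self
  rw [hvar, if_pos rfl, Finset.union_comm]

end Lam

/-! ### Structural properties of the type system -/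

mutual

theorem Der.keys_eq {Γ : TEnv} {Δ : VEnv} {M : Lam} {τ : OTy} : Der Γ Δ M τ → Δ.keys = M.fv
  | .esum h => h
  | .ax _ _ _ => Finmap.keys_singleton _ _
  | .app hM hN _ => by rw [Finmap.keys_union, hM.keys_eq, hN.keys_eq, Lam.fv]
  | .lam0 _ hx hM | .lamP _ hx hM => by
    rw [Lam.fv, ← hM.keys_eq, VEnv.keys_insert, Finset.erase_insert (by rwa [Finmap.mem_keys])]

theorem DerB.keys_eq {Γ : TEnv} {Δ : VEnv} {M : Lam} {m : MTy} : DerB Γ Δ M m → Δ.keys = M.fv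
  | .bang0 h => h
  | .one h | .cons h _ => h.keys_eq

end

mutual

theorem Der.apply_eq_zero {Γ : TEnv} {Δ : VEnv} {M : Lam} {τ : OTy} {z : ℕ} (hz : z ∉ M.fv) :
    Der Γ Δ M τ → Γ z = 0
  | .esum _ => rfl
  | .ax _ _ _ => Finsupp.single_eq_of_ne (by simpa [Lam.fv] using hz)
  | .app hM hN _ => by
    rw [Lam.fv, Finset.notMem_union] at hz
    rw [Finsupp.add_apply, hM.apply_eq_zero hz.1, hN.apply_eq_zero hz.2, add_zero]
  | .lam0 (x := x) hx _ hM => by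
    by_cases hzx : z = x
    · rwa [hzx]
    · exact hM.apply_eq_zero fun hzM => hz (Finset.mem_erase.2 ⟨hzx, hzM⟩)
  | .lamP (x := x) hx _ hM => by
    by_cases hzx : z = x
    · rwa [hzx]
    · have hsum := hM.apply_eq_zero fun hzM => hz (Finset.mem_erase.2 ⟨hzx, hzM⟩)
      simpa [hzx] using hsum

theorem DerB.apply_eq_zero {Γ : TEnv} {Δ : VEnv} {M : Lam} {m : MTy} {z : ℕ} (hz : z ∉ M.fv) :
    DerB Γ Δ M m → Γ z = 0
  | .bang0 _ => rfl
  | .one h => h.apply_eq_zero hz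
  | .cons h₀ h₁ => by
    rw [Finsupp.add_apply, h₀.apply_eq_zero hz, h₁.apply_eq_zero hz, add_zero]

end

theorem Der.eq_single_of_var {Γ : TEnv} {Δ : VEnv} {y : ℕ} {α : STy} :
    Der Γ Δ (.var y) (.simple α) → Γ = Finsupp.single y {α}
  | .ax _ _ _ => rfl

theorem der_lam_iff {Γ : TEnv} {Δ : VEnv} {x : ℕ} {M : Lam} {β : STy} :
    Der Γ Δ (.lam x M) (.simple β) ↔
      ∃ (m : MTy) (X : Finset ℕ) (γ : STy), (∀ Y, m = .empty Y → X = Y) ∧ β = m.arr γ ∧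
        Γ x = 0 ∧ x ∉ Δ ∧ Der (Γ + Finsupp.single x m.toM) (Δ.insert x X) M (.simple γ) := by
  constructor
  · intro h
    cases h with
    | @lam0 _ _ _ X _ γ hΓ hΔ h =>
      exact ⟨.empty X, X, γ, fun _ => MTy.empty.inj, rfl, hΓ, hΔ, by simpa [MTy.toM] using h⟩
    | @lamP _ _ _ X _ α l γ hΓ hΔ h => exact ⟨.mk α l, X, γ, nofun, rfl, hΓ, hΔ, h⟩
  · rintro ⟨m, X, γ, hm, rfl, hΓ, hΔ, h⟩
    cases m with
    | empty Y =>
      obtain rfl := hm Y rfl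
      exact .lam0 hΓ hΔ (by simpa [MTy.toM] using h)
    | mk α l => exact .lamP hΓ hΔ h

theorem DerB.exists_cons {Γ₀ Γ₁ : TEnv} {Δ : VEnv} {M : Lam} {α : STy} {m : MTy}
    (hα : Der Γ₀ Δ M (.simple α)) (hm : DerB Γ₁ Δ M m) :
    ∃ m' : MTy, m'.toM = α ::ₘ m.toM ∧ DerB (Γ₀ + Γ₁) Δ M m' := by
  cases m with
  | empty X =>
    cases hm
    exact ⟨.mk α [], rfl, by simpa using DerB.one hα⟩
  | mk α' l => exact ⟨.mk α (α' :: l), rfl, .cons hα hm⟩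

/-! ### Typing of substitutions -/

/-- The judgement `Γ; Δ ⊢ σ : Γ'` on the set `s`: `Γ` is a sum of type environments, one for every
occurrence of a type `α` in `Γ' z` with `z ∈ s`, each typing `σ z` with `α`. All copies of `σ z`
share the variable environment `Δ.restrict (σ z).fv`, as the premises of the rule `!⁺` do. -/
inductive DerSubst (Δ : VEnv) (σ : ℕ → Lam) (s : Finset ℕ) : TEnv → TEnv → Prop
  | zero : DerSubst Δ σ s 0 0
  | cons {Γ₀ Γ₁ Γ' : TEnv} {z : ℕ} {α : STy} :
      z ∈ s → Der Γ₀ (Δ.restrict (σ z).fv) (σ z) (.simple α) → DerSubst Δ σ s Γ₁ Γ' →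
      DerSubst Δ σ s (Γ₀ + Γ₁) (Finsupp.single z {α} + Γ')

namespace DerSubst

variable {Δ : VEnv} {σ : ℕ → Lam} {s : Finset ℕ} {Γ Γ' : TEnv}

theorem add {Γ₁ Γ₁' : TEnv} (h : DerSubst Δ σ s Γ Γ') (h₁ : DerSubst Δ σ s Γ₁ Γ₁') :
    DerSubst Δ σ s (Γ + Γ₁) (Γ' + Γ₁') := by
  induction h with
  | zero => simpa using h₁
  | cons hz hα _ ih => simpa only [add_assoc] using cons hz hα ih

theorem mono {Δ' : VEnv} {σ' : ℕ → Lam} {t : Finset ℕ} (h : DerSubst Δ σ s Γ Γ') (hst : s ⊆ t)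
    (hσ : ∀ z ∈ s, σ z = σ' z)
    (hΔ : ∀ z ∈ s, Δ.restrict (σ z).fv = Δ'.restrict (σ z).fv) : DerSubst Δ' σ' t Γ Γ' := by
  induction h with
  | zero => exact zero
  | cons hz hα _ ih =>
    rw [hΔ _ hz, hσ _ hz] at hα
    exact cons (hst hz) hα ih

theorem apply_eq_zero_of_notMem {z : ℕ} (h : DerSubst Δ σ s Γ Γ') (hz : z ∉ s) : Γ' z = 0 := by
  induction h with
  | zero => rfl
  | cons hs _ _ ih => simp [ih, ne_of_mem_of_not_mem hs hz]

theorem apply_eq_zero_of_notMem_fv {y : ℕ} (h : DerSubst Δ σ s Γ Γ')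
    (hy : y ∉ s.biUnion fun z => (σ z).fv) : Γ y = 0 := by
  induction h with
  | zero => rfl
  | cons hz hα _ ih =>
    have hyz := fun hyz => hy (Finset.mem_biUnion.2 ⟨_, hz, hyz⟩)
    rw [Finsupp.add_apply, hα.apply_eq_zero hyz, ih, add_zero]

theorem eq_mapDomain {ρ : ℕ → ℕ} (h : DerSubst Δ σ s Γ Γ') (hσ : ∀ z ∈ s, σ z = .var (ρ z)) :
    Γ = Γ'.mapDomain ρ := by
  induction h with
  | zero => exact Finsupp.mapDomain_zero.symm
  | @cons _ _ _ z _ hz hα _ ih =>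
    rw [hσ z hz] at hα
    rw [Finsupp.mapDomain_add, Finsupp.mapDomain_single, ← ih, hα.eq_single_of_var]

theorem exists_add_single (h : DerSubst Δ σ s Γ Γ') (x : ℕ) :
    ∃ (Γ₁ Γ₂ Γ₁' : TEnv) (μ : Multiset STy), Γ = Γ₁ + Γ₂ ∧ Γ' = Γ₁' + Finsupp.single x μ ∧
      DerSubst Δ σ (s.erase x) Γ₁ Γ₁' ∧ DerSubst Δ σ {x} Γ₂ (Finsupp.single x μ) := by
  induction h with
  | zero => exact ⟨0, 0, 0, 0, by simp, by simp, zero, by simpa using zero⟩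
  | @cons Γ₀ _ _ z α hz hα _ ih =>
    obtain ⟨Γ₁, Γ₂, Γ₁', μ, rfl, rfl, h₁, h₂⟩ := ih
    by_cases hzx : z = x
    · subst hzx
      refine ⟨Γ₁, Γ₀ + Γ₂, Γ₁', {α} + μ, add_left_comm .., ?_, h₁, ?_⟩
      · rw [Finsupp.single_add, add_left_comm]
      · rw [Finsupp.single_add]
        exact cons (Finset.mem_singleton_self z) hα h₂
    · exact ⟨Γ₀ + Γ₁, Γ₂, Finsupp.single z {α} + Γ₁', μ, (add_assoc ..).symm, (add_assoc ..).symm,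
        cons (Finset.mem_erase.2 ⟨hzx, hz⟩) hα h₁, h₂⟩

theorem exists_derB {x : ℕ} (h : DerSubst Δ σ {x} Γ Γ') (hx : (σ x).fv ⊆ Δ.keys) :
    ∃ m : MTy, m.toM = Γ' x ∧ DerB Γ (Δ.restrict (σ x).fv) (σ x) m := by
  induction h with
  | zero =>
    refine ⟨.empty _, rfl, .bang0 ?_⟩
    rw [VEnv.keys_restrict, Finset.inter_eq_right.2 hx]
  | cons hz hα _ ih =>
    obtain rfl := Finset.mem_singleton.1 hz
    obtain ⟨m, hm, hB⟩ := ih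
    obtain ⟨m', hm', hB'⟩ := hB.exists_cons hα
    exact ⟨m', by simp [hm', hm], hB'⟩

end DerSubst

/-! ### Inversion of simultaneous substitution -/

theorem finsupp_add_single_inj {ι A : Type*} [AddRightCancelMonoid A] {f g : ι →₀ A} {i : ι}
    {a b : A} (hf : f i = 0) (hg : g i = 0) :
    f + Finsupp.single i a = g + Finsupp.single i b ↔ f = g ∧ a = b := by
  refine ⟨fun h => ?_, fun ⟨hfg, hab⟩ => by rw [hfg, hab]⟩
  have hab : a = b := by simpa [hf, hg] using DFunLike.congr_fun h i
  subst hab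
  exact ⟨add_right_cancel h, rfl⟩

/-- `M` satisfies substitution inversion: a typing of a substitution instance `M.substF σ` arises
from a typing of `M` together with a typing of `σ`. This is the induction hypothesis of the backward
substitution lemma. -/
def Lam.SubstInversion (M : Lam) : Prop :=
  ∀ ⦃σ : ℕ → Lam⦄ ⦃Γ : TEnv⦄ ⦃Δ : VEnv⦄ ⦃β : STy⦄, Der Γ Δ (M.substF σ) (.simple β) →
    ∃ Γ', DerSubst Δ σ M.fv Γ Γ' ∧ Der Γ' (Δ.pullback σ M.fv) M (.simple β)

namespace Lam.SubstInversion

theorem var (x : ℕ) : SubstInversion (.var x) := by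
  intro σ Γ Δ β h
  rw [substF] at h
  have hΔ : Δ.restrict (σ x).fv = Δ := VEnv.restrict_eq_self h.keys_eq.subset
  have hpull : Δ.pullback σ {x} = Finmap.singleton x Δ.uni := by
    rw [VEnv.pullback, VEnv.ofFun_singleton, hΔ]
  refine ⟨Finsupp.single x {β}, ?_, ?_⟩
  · have hcons : DerSubst Δ σ (Lam.var x).fv (Γ + 0) (Finsupp.single x {β} + 0) :=
      .cons (Finset.mem_singleton_self x) (hΔ.symm ▸ h) .zero
    simpa only [add_zero] using hcons
  · rw [fv, hpull]
    exact .ax x β Δ.uni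

theorem derB {M : Lam} (hM : M.SubstInversion) {σ : ℕ → Lam} {Γ : TEnv} {Δ : VEnv} {m : MTy}
    (h : DerB Γ Δ (M.substF σ) m) :
    ∃ Γ', DerSubst Δ σ M.fv Γ Γ' ∧ DerB Γ' (Δ.pullback σ M.fv) M m := by
  cases m with
  | empty X =>
    cases h with
    | bang0 hkeys =>
      rw [fv_substF] at hkeys
      refine ⟨0, .zero, ?_⟩
      rw [← VEnv.uni_pullback hkeys]
      exact .bang0 (VEnv.keys_ofFun _ _)
  | mk α l =>
    induction l generalizing Γ α with
    | nil =>
      cases h with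
      | one h =>
        obtain ⟨Γ', hσ, hα⟩ := hM h
        exact ⟨Γ', hσ, .one hα⟩
    | cons α' l ih =>
      cases h with
      | cons h₀ h₁ =>
        obtain ⟨Γ₀', hσ₀, hα⟩ := hM h₀
        obtain ⟨Γ₁', hσ₁, hl⟩ := ih α' h₁
        exact ⟨Γ₀' + Γ₁', hσ₀.add hσ₁, .cons hα hl⟩

theorem app {P Q : Lam} (hP : P.SubstInversion) (hQ : Q.SubstInversion) :
    SubstInversion (.app P Q) := by
  intro σ Γ Δ β h
  rw [substF] at h
  cases h with
  | @app Γ₀ Γ₁ Δ₀ Δ₁ _ _ m _ h₀ h₁ hc =>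
    obtain ⟨Γ₀', hσ₀, hP'⟩ := hP h₀
    obtain ⟨Γ₁', hσ₁, hQ'⟩ := hQ.derB h₁
    have hΔ₀ : ∀ z ∈ P.fv, Δ₀.restrict (σ z).fv = (Δ₀ ∪ Δ₁).restrict (σ z).fv := fun z hz =>
      (VEnv.union_restrict_of_subset_left Δ₁ (h₀.keys_eq ▸ fv_subset_fv_substF σ hz)).symm
    have hΔ₁ : ∀ z ∈ Q.fv, Δ₁.restrict (σ z).fv = (Δ₀ ∪ Δ₁).restrict (σ z).fv := fun z hz =>
      (hc.union_restrict_of_subset_right (h₁.keys_eq ▸ fv_subset_fv_substF σ hz)).symm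
    rw [VEnv.pullback_congr (fun _ _ => rfl) hΔ₀] at hP'
    rw [VEnv.pullback_congr (fun _ _ => rfl) hΔ₁] at hQ'
    refine ⟨Γ₀' + Γ₁', ?_, ?_⟩
    · exact (hσ₀.mono Finset.subset_union_left (fun _ _ => rfl) hΔ₀).add
        (hσ₁.mono Finset.subset_union_right (fun _ _ => rfl) hΔ₁)
    · rw [fv, VEnv.pullback, VEnv.ofFun_union]
      exact .app hP' hQ' (VEnv.coh_ofFun _ _ _)

theorem lam (x : ℕ) {P : Lam} (hP : P.SubstInversion) : SubstInversion (.lam x P) := by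
  intro σ Γ Δ β h
  rw [substF] at h
  have hy := freshVar_notMem ((P.fv.erase x).biUnion fun z => (σ z).fv)
  generalize freshVar ((P.fv.erase x).biUnion fun z => (σ z).fv) = y at h hy
  obtain ⟨m, X, γ, hm, rfl, hΓy, -, hbody⟩ := der_lam_iff.1 h
  have hxP : x ∈ P.fv := mem_fv_of_mem_fv_substF_update hy (by
    rw [← hbody.keys_eq, VEnv.keys_insert]
    exact Finset.mem_insert_self y _)
  obtain ⟨Γ', hσ, hP'⟩ := hP hbody
  have hσz : ∀ z ∈ P.fv.erase x, Function.update σ x (.var y) z = σ z := fun z hz =>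
    Function.update_of_ne (Finset.ne_of_mem_erase hz) _ _
  have hyz : ∀ z ∈ P.fv.erase x, y ∉ (σ z).fv := fun z hz hyz =>
    hy (Finset.mem_biUnion.2 ⟨z, hz, hyz⟩)
  have hΔ : ∀ z ∈ P.fv.erase x,
      VEnv.restrict (Δ.insert y X) (Function.update σ x (.var y) z).fv =
        Δ.restrict (Function.update σ x (.var y) z).fv := fun z hz => by
    rw [hσz z hz]
    exact Δ.insert_restrict_of_notMem X (hyz z hz)
  obtain ⟨Γ₁, Γ₂, Γ₁', μ, hsplit, rfl, hσ₁, hσ₂⟩ := hσ.exists_add_single x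
  replace hσ₁ := hσ₁.mono subset_rfl hσz hΔ
  have hΓ₂ : Γ₂ = Finsupp.single y μ := by
    rw [hσ₂.eq_mapDomain (ρ := fun _ => y) (by simp), Finsupp.mapDomain_single]
  rw [hΓ₂, finsupp_add_single_inj hΓy (hσ₁.apply_eq_zero_of_notMem_fv hy)] at hsplit
  obtain ⟨rfl, rfl⟩ := hsplit
  refine ⟨Γ₁', hσ₁, der_lam_iff.2 ⟨m, X, γ, hm, rfl, ?_, ?_, ?_⟩⟩
  · exact hσ₁.apply_eq_zero_of_notMem (Finset.notMem_erase x _)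
  · simp [VEnv.pullback, fv]
  · convert hP' using 1
    rw [← VEnv.insert_pullback_erase _ _ hxP, VEnv.pullback_congr hσz hΔ, Function.update_self,
      fv, fv, VEnv.uni_insert_restrict_singleton]

end Lam.SubstInversion

theorem Lam.substInversion (M : Lam) : M.SubstInversion := by
  induction M with
  | var x => exact .var x
  | app P Q hP hQ => exact hP.app hQ
  | lam x P hP => exact hP.lam x

theorem stmt4_general (Γ : TEnv) (Δ : VEnv) (M N : Lam) (x : ℕ) (β : STy) (hx : x ∈ M.fv)
    (h : Der Γ Δ (M.subst x N) (.simple β)) :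
    ∃ (m : MTy) (ΓM ΓN : TEnv) (ΔM ΔN : VEnv),
      ΓM x = 0 ∧ x ∉ ΔM ∧
      Der (ΓM + Finsupp.single x m.toM) (ΔM.insert x (VEnv.uni ΔN)) M (.simple β) ∧
      DerB ΓN ΔN N m ∧
      Γ = ΓM + ΓN ∧ VEnv.Coh ΔM ΔN ∧ Δ = ΔM ∪ ΔN := by
  have hkeys : Δ.keys = M.fv.erase x ∪ N.fv := h.keys_eq.trans (Lam.fv_subst N hx)
  have hMkeys : M.fv.erase x ⊆ Δ.keys := hkeys ▸ Finset.subset_union_left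
  have hNkeys : N.fv ⊆ Δ.keys := hkeys ▸ Finset.subset_union_right
  have hvar : ∀ z ∈ M.fv.erase x, (if z = x then N else .var z) = Lam.var z := fun z hz =>
    if_neg (Finset.ne_of_mem_erase hz)
  obtain ⟨Γ', hσ, hM⟩ := M.substInversion h
  obtain ⟨ΓM, ΓN, ΓM', μ, rfl, rfl, hσM, hσN⟩ := hσ.exists_add_single x
  have hΓM : ΓM = ΓM' := (hσM.eq_mapDomain hvar).trans Finsupp.mapDomain_id
  subst hΓM
  obtain ⟨m, hm, hN⟩ := hσN.exists_derB (by simpa using hNkeys)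
  simp only [if_true, Finsupp.single_eq_same] at hm hN
  refine ⟨m, ΓM, ΓN, Δ.restrict (M.fv.erase x), Δ.restrict N.fv,
    hσM.apply_eq_zero_of_notMem (Finset.notMem_erase x _), ?_, ?_, hN, rfl,
    Δ.coh_restrict _ _, ?_⟩
  · simp [← Finmap.mem_keys, VEnv.keys_restrict]
  · rw [hm, ← VEnv.pullback_var hMkeys, ← VEnv.pullback_congr hvar fun _ _ => rfl]
    convert hM using 1
    rw [← VEnv.insert_pullback_erase _ _ hx, if_pos rfl]
  · rw [← VEnv.restrict_union, VEnv.restrict_eq_self hkeys.subset]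

/-- Backward Substitution Lemma. -/
theorem stmt4 (Γ : TEnv) (Δ : VEnv) (M N : Lam) (x : ℕ) (β : STy)
    (hM : M.IsI) (hN : N.IsI) (hx : x ∈ M.fv)
    (h : Der Γ Δ (M.subst x N) (.simple β)) :
    ∃ (m : MTy) (ΓM ΓN : TEnv) (ΔM ΔN : VEnv),
      ΓM x = 0 ∧ x ∉ ΔM ∧
      Der (ΓM + Finsupp.single x m.toM) (ΔM.insert x (VEnv.uni ΔN)) M (.simple β) ∧
      DerB ΓN ΔN N m ∧
      Γ = ΓM + ΓN ∧ VEnv.Coh ΔM ΔN ∧ Δ = ΔM ∪ ΔN :=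
  stmt4_general Γ Δ M N x β hx h
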